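/- arXiv:2006.14671 — 2 statements merged into one kernel-verified Lean document; each statement's English description precedes it below -/
import Mathlib

section
/- Let n be a positive integer of the form n = 3^r·∏ p_i^{r_i}, where the p_i are primes congruent to 1 modulo 3 and r ≤ 1 (equivalently, n is not divisible by 9 and not divisible by any prime congruent to 2 modulo 3). Then there exist a number field K and an associative unital K-algebra A which is a division ring, has center equal to K, and has dimension 9 over K, such that the quotient group Aˣ/Kˣ contains an element of order n. -/
/-- The central subgroup `Kˣ ⊆ Aˣ`: the units of `A` lying in the image of the structure map
`K → A`. -/
def centralUnits (K A : Type*) [Field K] [DivisionRing A] [Algebra K A] : Subgroup Aˣ :=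
  (Units.map (algebraMap K A).toMonoidHom).range

instance centralUnits_normal (K A : Type*) [Field K] [DivisionRing A] [Algebra K A] :
    (centralUnits K A).Normal := by
  constructor
  intro x hx g
  obtain ⟨k, hk⟩ := hx
  have hx' : (x : A) = algebraMap K A (k : K) := by rw [← hk]; rfl
  have h1 : g * x = x * g := by
    apply Units.ext
    rw [Units.val_mul, Units.val_mul, hx']
    exact (Algebra.commutes (k : K) (g : A)).symm
  have h2 : g * x * g⁻¹ = x := by rw [h1, mul_inv_cancel_right]
  rw [h2]
  exact ⟨k, hk⟩

/-- A central division algebra of dimension `9` over a number field `K`: the data of a number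
field `K` and an associative unital `K`-algebra `A` which is a division ring, has center equal
to `K`, and has dimension `9` over `K`. Such an algebra corresponds to a non-trivial
Severi–Brauer surface `S` over `K`, with `Aut(S) ≅ Aˣ/Kˣ`. -/
structure CentralDivAlg where
  K : Type
  A : Type
  [fieldK : Field K]
  [numberFieldK : NumberField K]
  [divisionRingA : DivisionRing A]
  [algebraKA : Algebra K A]
  center_eq_bot : Subalgebra.center K A = ⊥
  finrank_eq_nine : Module.finrank K A = 9

attribute [instance] CentralDivAlg.fieldK CentralDivAlg.numberFieldK
  CentralDivAlg.divisionRingA CentralDivAlg.algebraKA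

/-- The quotient group `Aˣ/Kˣ`, isomorphic to the automorphism group of the corresponding
Severi–Brauer surface. -/
abbrev CentralDivAlg.Q (D : CentralDivAlg) : Type := (D.A)ˣ ⧸ centralUnits D.K D.A

theorem exists_pow_dvd_sq_add_add_one {p : ℕ} (hp : p.Prime) (h3 : p % 3 = 1) (k : ℕ) :
    ∃ a : ℤ, ((p ^ k : ℕ) : ℤ) ∣ a ^ 2 + a + 1 := by
  have : Fact p.Prime := ⟨hp⟩
  have hcard : 3 ∣ Nat.card (ZMod p)ˣ := by
    rw [Nat.card_eq_fintype_card, ZMod.card_units]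
    omega
  obtain ⟨u, hu⟩ := exists_prime_orderOf_dvd_card' 3 hcard
  obtain ⟨b, hb⟩ := ZMod.intCast_surjective (u : ZMod p)
  have hb3 : (p : ℤ) ∣ b ^ 3 - 1 := by
    rw [← ZMod.intCast_zmod_eq_zero_iff_dvd]
    push_cast
    rw [hb, ← Units.val_pow_eq_pow_val, ← hu, pow_orderOf_eq_one]
    simp
  have hb1 : ¬ (p : ℤ) ∣ b ^ p ^ k - 1 := by
    rw [← ZMod.intCast_zmod_eq_zero_iff_dvd]
    push_cast
    rw [ZMod.pow_card_pow, hb, sub_eq_zero]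
    intro h
    rw [Units.val_eq_one.1 h, orderOf_one] at hu
    norm_num at hu
  refine ⟨b ^ p ^ k, ?_⟩
  have hdvd := dvd_sub_pow_of_dvd_sub hb3 k
  rw [one_pow, ← pow_mul, mul_comm, pow_mul] at hdvd
  have hcop : IsCoprime ((p ^ k : ℕ) : ℤ) (b ^ p ^ k - 1) := by
    push_cast
    exact ((Nat.prime_iff_prime_int.1 hp).coprime_iff_not_dvd.2 hb1).pow_left
  refine hcop.dvd_of_dvd_mul_left ?_
  push_cast
  refine ((pow_dvd_pow _ k.le_succ).trans hdvd).trans (dvd_of_eq ?_)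
  ring

theorem exists_dvd_sq_add_add_one {n : ℕ} (hn : 0 < n) (h9 : ¬ 9 ∣ n)
    (hdiv : ∀ p : ℕ, p.Prime → p ∣ n → p = 3 ∨ p % 3 = 1) :
    ∃ a : ℤ, (n : ℤ) ∣ a ^ 2 + a + 1 := by
  induction n using Nat.recOnPosPrimePosCoprime with
  | zero => omega
  | one => exact ⟨0, by simp⟩
  | prime_pow p k hp hk =>
    rcases hdiv p hp (dvd_pow_self p hk.ne') with rfl | h3
    · obtain rfl : k = 1 := by
        by_contra hk1
        exact h9 (pow_dvd_pow 3 (show 2 ≤ k by omega))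
      exact ⟨1, by norm_num⟩
    · exact exists_pow_dvd_sq_add_add_one hp h3 k
  | coprime m l hm hl hml ihm ihl =>
    obtain ⟨a, ha⟩ := ihm (by omega) (fun h ↦ h9 (h.mul_right l))
      (fun p hp h ↦ hdiv p hp (h.mul_right l))
    obtain ⟨b, hb⟩ := ihl (by omega) (fun h ↦ h9 (h.mul_left m))
      (fun p hp h ↦ hdiv p hp (h.mul_left m))
    obtain ⟨s, t, hst⟩ := Nat.isCoprime_iff_coprime.2 hml
    have key {r c d : ℤ} (hcd : r ∣ c - d) (hd : r ∣ d ^ 2 + d + 1) : r ∣ c ^ 2 + c + 1 := by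
      have h : c ^ 2 + c + 1 = (c - d) * (c + d + 1) + (d ^ 2 + d + 1) := by ring
      exact h ▸ dvd_add (hcd.mul_right _) hd
    refine ⟨b * (s * m) + a * (t * l), ?_⟩
    push_cast
    refine (Nat.isCoprime_iff_coprime.2 hml).mul_dvd (key ⟨s * (b - a), ?_⟩ ha)
      (key ⟨t * (a - b), ?_⟩ hb)
    · linear_combination a * hst
    · linear_combination b * hst

open WithZero in
theorem pow_form_cases {a b c d : ℤᵐ⁰} (hd : d = exp (-1)) (h : ¬(a = 0 ∧ b = 0 ∧ c = 0)) :
    (d * b ^ 3 < a ^ 3 ∧ d ^ 2 * c ^ 3 < a ^ 3 ∧ d * (a * b * c) < a ^ 3) ∨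
    (a ^ 3 < d * b ^ 3 ∧ d ^ 2 * c ^ 3 < d * b ^ 3 ∧ d * (a * b * c) < d * b ^ 3) ∨
    (a ^ 3 < d ^ 2 * c ^ 3 ∧ d * b ^ 3 < d ^ 2 * c ^ 3 ∧ d * (a * b * c) < d ^ 2 * c ^ 3) := by
  have e (x : ℤᵐ⁰) : x = 0 ∨ ∃ i : ℤ, x = exp i :=
    (eq_or_ne x 0).imp_right fun hx ↦ ⟨log x, (exp_log hx).symm⟩
  subst hd
  rcases e a with rfl | ⟨i, rfl⟩ <;> rcases e b with rfl | ⟨j, rfl⟩ <;>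
    rcases e c with rfl | ⟨k, rfl⟩ <;>
    simp [← exp_nsmul, ← exp_add, -exp_neg] at h ⊢
  all_goals omega

open WithZero in
theorem cubic_norm_form_ne_zero {L : Type*} [Field L] (v : Valuation L ℤᵐ⁰) (σ : L → L)
    (hσ : ∀ x, v (σ x) = v x) {b : L} (hb : v b = exp (-1)) {x y z : L}
    (h : ¬(x = 0 ∧ y = 0 ∧ z = 0)) :
    x * σ x * σ (σ x) + b * (y * σ y * σ (σ y)) + b ^ 2 * (z * σ z * σ (σ z)) -
      b * (x * σ y * σ (σ z) + y * σ z * σ (σ x) + z * σ x * σ (σ y)) ≠ 0 := by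
  have hN (w : L) : v (w * σ w * σ (σ w)) = v w ^ 3 := by
    simp only [map_mul, hσ, pow_succ, pow_zero, one_mul]
  have hX := hN x
  have hY : v (b * (y * σ y * σ (σ y))) = v b * v y ^ 3 := by rw [map_mul, hN]
  have hZ : v (b ^ 2 * (z * σ z * σ (σ z))) = v b ^ 2 * v z ^ 3 := by
    rw [map_mul, map_pow, hN]
  have hT : v (b * (x * σ y * σ (σ z) + y * σ z * σ (σ x) + z * σ x * σ (σ y))) ≤
      v b * (v x * v y * v z) := by
    rw [map_mul]
    gcongr
    refine v.map_add_le (v.map_add_le ?_ ?_) ?_ <;> simp only [map_mul, hσ] <;>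
      apply le_of_eq <;> ac_rfl
  have key {P Q R S : L} (hQ : v Q < v P) (hR : v R < v P) (hS : v S < v P) :
      P + Q + R - S ≠ 0 := by
    intro h0
    have hP : P = S - Q - R := by linear_combination h0
    exact lt_irrefl (v P) <| hP ▸ v.map_sub_lt (v.map_sub_lt (hP ▸ hS) (hP ▸ hQ)) (hP ▸ hR)
  simp only [← v.zero_iff] at h
  rcases pow_form_cases hb h with ⟨h1, h2, h3⟩ | ⟨h1, h2, h3⟩ | ⟨h1, h2, h3⟩ <;>
    rw [← hX, ← hY, ← hZ] at *
  · exact key h1 h2 (hT.trans_lt h3)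
  · rw [add_comm (x * σ x * σ (σ x))]
    exact key h1 h2 (hT.trans_lt h3)
  · rw [add_comm (_ + _), ← add_assoc]
    exact key h1 h2 (hT.trans_lt h3)

section CyclicAlgebra

open Matrix

variable {K L : Type*} [Field K] [Field L] [Algebra K L]

/-- The companion matrix of `X ^ 3 - b`, up to transposition. -/
def cubicShift (b : L) : Matrix (Fin 3) (Fin 3) L := !![0, 1, 0; 0, 0, 1; b, 0, 0]

/-- The cyclic algebra `(L/K, σ, b)` of degree three, realised as the algebra of those matrices
over `L` on which applying `σ` entrywise agrees with conjugation by `cubicShift b`. -/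
def cyclicAlgebra (σ : L →ₐ[K] L) (b : K) : Subalgebra K (Matrix (Fin 3) (Fin 3) L) where
  carrier := {M | σ.mapMatrix M * cubicShift (algebraMap K L b) =
    cubicShift (algebraMap K L b) * M}
  mul_mem' {M N} hM hN := by
    simp only [Set.mem_ofPred_eq] at *
    rw [map_mul, mul_assoc, hN, ← mul_assoc, hM, mul_assoc]
  add_mem' {M N} hM hN := by
    simp only [Set.mem_ofPred_eq] at *
    rw [map_add, add_mul, mul_add, hM, hN]
  algebraMap_mem' r := by
    simp only [Set.mem_ofPred_eq]
    rw [AlgHom.commutes]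
    exact Algebra.commutes r _

/-- The element of the cyclic algebra with first row `(x, y, z)`. -/
def cyclicMatrix (σ : L →ₐ[K] L) (b : K) (x y z : L) : Matrix (Fin 3) (Fin 3) L :=
  !![x, y, z;
    algebraMap K L b * σ z, σ x, σ y;
    algebraMap K L b * σ (σ y), algebraMap K L b * σ (σ z), σ (σ x)]

variable {σ : L →ₐ[K] L} {b : K}

theorem mem_cyclicAlgebra {M : Matrix (Fin 3) (Fin 3) L} :
    M ∈ cyclicAlgebra σ b ↔ σ.mapMatrix M * cubicShift (algebraMap K L b) =
      cubicShift (algebraMap K L b) * M := Iff.rfl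

theorem cyclicMatrix_mem (hσ : ∀ x, σ (σ (σ x)) = x) (x y z : L) :
    cyclicMatrix σ b x y z ∈ cyclicAlgebra σ b := by
  rw [mem_cyclicAlgebra]
  ext i j
  fin_cases i <;> fin_cases j <;>
    simp [cyclicMatrix, cubicShift, Matrix.mul_apply, Fin.sum_univ_three, hσ, mul_comm]

theorem eq_cyclicMatrix {M : Matrix (Fin 3) (Fin 3) L} (hM : M ∈ cyclicAlgebra σ b) :
    M = cyclicMatrix σ b (M 0 0) (M 0 1) (M 0 2) := by
  rw [mem_cyclicAlgebra] at hM
  have h (i j) := congrFun₂ hM i j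
  have h00 := h 0 0
  have h01 := h 0 1
  have h02 := h 0 2
  have h10 := h 1 0
  have h11 := h 1 1
  have h12 := h 1 2
  simp [cubicShift, Matrix.mul_apply, Fin.sum_univ_three] at h00 h01 h02 h10 h11 h12
  ext i j
  fin_cases i <;> fin_cases j <;>
    simp [cyclicMatrix, ← h00, ← h01, ← h02, ← h10, ← h11, ← h12, mul_comm]

/-- Elements of the cyclic algebra are determined by their first row. -/
def cyclicAlgebraEquiv (b : K) (hσ : ∀ x, σ (σ (σ x)) = x) :
    cyclicAlgebra σ b ≃ₗ[K] (Fin 3 → L) where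
  toFun M := M.1 0
  map_add' _ _ := rfl
  map_smul' _ _ := rfl
  invFun v := ⟨cyclicMatrix σ b (v 0) (v 1) (v 2), cyclicMatrix_mem hσ _ _ _⟩
  left_inv M := Subtype.ext (eq_cyclicMatrix M.2).symm
  right_inv v := by
    ext j
    fin_cases j <;> rfl

theorem finrank_cyclicAlgebra [FiniteDimensional K L] (hσ : ∀ x, σ (σ (σ x)) = x) :
    Module.finrank K (cyclicAlgebra σ b) = 3 * Module.finrank K L := by
  simp [(cyclicAlgebraEquiv b hσ).finrank_eq, Module.finrank_pi_fintype]

theorem det_cyclicMatrix (x y z : L) :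
    (cyclicMatrix σ b x y z).det =
      x * σ x * σ (σ x) + algebraMap K L b * (y * σ y * σ (σ y)) +
        algebraMap K L b ^ 2 * (z * σ z * σ (σ z)) -
      algebraMap K L b * (x * σ y * σ (σ z) + y * σ z * σ (σ x) + z * σ x * σ (σ y)) := by
  rw [det_fin_three]
  simp [cyclicMatrix]
  ring

open WithZero in
theorem isDomain_cyclicAlgebra (v : Valuation L ℤᵐ⁰) (hσ : ∀ x, v (σ x) = v x)
    (hb : v (algebraMap K L b) = exp (-1)) : IsDomain (cyclicAlgebra σ b) := by
  have hdet (M : cyclicAlgebra σ b) (hM : M ≠ 0) : M.1.det ≠ 0 := by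
    rw [eq_cyclicMatrix M.2, det_cyclicMatrix]
    refine cubic_norm_form_ne_zero v σ hσ hb fun ⟨hx, hy, hz⟩ ↦ hM (Subtype.ext ?_)
    rw [eq_cyclicMatrix M.2, hx, hy, hz]
    ext i j
    fin_cases i <;> fin_cases j <;> simp [cyclicMatrix]
  have : NoZeroDivisors (cyclicAlgebra σ b) := ⟨fun {M N} h ↦ by
    by_contra! hMN
    have h' := congrArg (fun P : cyclicAlgebra σ b ↦ P.1.det) h
    simp [hdet _ hMN.1, hdet _ hMN.2] at h'⟩
  exact NoZeroDivisors.to_isDomain _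

theorem center_cyclicAlgebra (hσ : ∀ x, σ (σ (σ x)) = x)
    (hfix : ∀ x, σ x = x → x ∈ Set.range (algebraMap K L)) {t : L} (ht : σ t ≠ t) :
    Subalgebra.center K (cyclicAlgebra σ b) = ⊥ := by
  have ht' : σ (σ t) ≠ t := fun h ↦ ht (by simpa [hσ] using (congrArg σ h).symm)
  rw [eq_bot_iff]
  intro M hM
  rw [Subalgebra.mem_center_iff] at hM
  have hT := congrArg Subtype.val (hM ⟨_, cyclicMatrix_mem hσ t 0 0⟩)
  have hU := congrArg Subtype.val (hM ⟨_, cyclicMatrix_mem hσ 0 1 0⟩)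
  have hMeq := eq_cyclicMatrix M.2
  set x := M.1 0 0
  set y := M.1 0 1
  set z := M.1 0 2
  simp only [Subalgebra.coe_mul, hMeq] at hT hU
  have h1 := congrFun₂ hT 0 1
  have h2 := congrFun₂ hT 0 2
  have h3 := congrFun₂ hU 0 1
  simp [cyclicMatrix, Matrix.mul_apply, Fin.sum_univ_three] at h1 h2 h3
  have hy : y = 0 := by
    by_contra hy
    exact ht (mul_left_cancel₀ hy (by linear_combination -h1))
  have hz : z = 0 := by
    by_contra hz
    exact ht' (mul_left_cancel₀ hz (by linear_combination -h2))
  obtain ⟨c, hc⟩ := hfix x h3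
  refine Algebra.mem_bot.2 ⟨c, Subtype.ext ?_⟩
  rw [hMeq, hy, hz, ← hc]
  ext i j
  fin_cases i <;> fin_cases j <;>
    simp [cyclicMatrix, Matrix.algebraMap_eq_diagonal]

/-- The diagonal embedding of `L` into the cyclic algebra. -/
def cyclicAlgebraDiag (b : K) (hσ : ∀ x, σ (σ (σ x)) = x) : L →ₐ[K] cyclicAlgebra σ b :=
  AlgHom.ofLinearMap
    { toFun x := ⟨cyclicMatrix σ b x 0 0, cyclicMatrix_mem hσ _ _ _⟩
      map_add' x y := by
        ext i j
        fin_cases i <;> fin_cases j <;> simp [cyclicMatrix]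
      map_smul' c x := by
        ext i j
        fin_cases i <;> fin_cases j <;> simp [cyclicMatrix] }
    (by
      ext i j
      fin_cases i <;> fin_cases j <;> simp [cyclicMatrix])
    (fun x y ↦ by
      ext i j
      fin_cases i <;> fin_cases j <;>
        simp [cyclicMatrix])

end CyclicAlgebra

theorem exists_map_eq_mul_of_norm_eq_one {K L : Type*} [Field K] [Field L] [Algebra K L]
    {σ : L →ₐ[K] L} (hσ : ∀ x, σ (σ (σ x)) = x) {t : L} (ht : σ t ≠ t) {ξ : L}
    (hξ : ξ * σ ξ * σ (σ ξ) = 1) : ∃ g : L, g ≠ 0 ∧ σ g = ξ * g := by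
  have ht' : σ (σ t) ≠ t := fun h ↦ ht (by simpa [hσ] using (congrArg σ h).symm)
  have hξ0 : ξ ≠ 0 := by
    rintro rfl
    simp at hξ
  have hσξ : σ ξ ≠ 0 := by simpa using hξ0
  let f : Fin 3 → L →* L := ![MonoidHom.id L, (σ : L →* L), (σ.comp σ : L →* L)]
  have hf : Function.Injective f := by
    have h01 : f 0 ≠ f 1 := fun h ↦ ht (DFunLike.congr_fun h t).symm
    have h02 : f 0 ≠ f 2 := fun h ↦ ht' (DFunLike.congr_fun h t).symm
    have h12 : f 1 ≠ f 2 := fun h ↦ ht (σ.injective (DFunLike.congr_fun h t).symm)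
    intro i j
    fin_cases i <;> fin_cases j <;> simp [h01, h02, h12, h01.symm, h02.symm, h12.symm]
  have hli := Fintype.linearIndependent_iff.1 ((linearIndependent_monoidHom L L).comp f hf)
    ![1, ξ⁻¹, ξ⁻¹ * (σ ξ)⁻¹]
  have hne : ∃ c, c + ξ⁻¹ * σ c + ξ⁻¹ * (σ ξ)⁻¹ * σ (σ c) ≠ 0 := by
    by_contra! h
    refine one_ne_zero (hli (funext fun c ↦ ?_) 0)
    simpa [Fin.sum_univ_three, f] using h c
  obtain ⟨c, hc⟩ := hne
  refine ⟨_, hc, ?_⟩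
  simp only [map_add, map_mul, map_inv₀, hσ]
  have hσσξ : σ (σ ξ) ≠ 0 := by simpa using hξ0
  field_simp
  linear_combination (-c) * hξ

theorem orderOf_eq_of_pow_eq_one_iff {G : Type*} [Monoid G] {x : G} {n : ℕ}
    (h : ∀ k : ℕ, x ^ k = 1 ↔ n ∣ k) : orderOf x = n :=
  Nat.dvd_antisymm (orderOf_dvd_of_pow_eq_one ((h n).2 dvd_rfl))
    ((h _).1 (pow_orderOf_eq_one x))

open WithZero in
theorem exists_centralDivAlg_orderOf_eq {K L : Type} [Field K] [NumberField K] [Field L]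
    [Algebra K L] [FiniteDimensional K L] (hrank : Module.finrank K L = 3) {σ : L →ₐ[K] L}
    (hσ : ∀ x, σ (σ (σ x)) = x) (hfix : ∀ x, σ x = x → x ∈ Set.range (algebraMap K L)) {b : K}
    (v : Valuation L ℤᵐ⁰) (hv : ∀ x, v (σ x) = v x) (hb : v (algebraMap K L b) = exp (-1))
    {n : ℕ} {ξ : L} (hξ : IsPrimitiveRoot ξ n) (hσξ : σ ξ ≠ ξ)
    (hnorm : ξ * σ ξ * σ (σ ξ) = 1) :
    ∃ (D : CentralDivAlg) (g : D.Q), orderOf g = n := by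
  obtain ⟨g, hg, hσg⟩ := exists_map_eq_mul_of_norm_eq_one hσ hσξ hnorm
  have := isDomain_cyclicAlgebra v hv hb
  have hfr : Module.finrank K (cyclicAlgebra σ b) = 9 := by
    rw [finrank_cyclicAlgebra hσ, hrank]
  have : FiniteDimensional K (cyclicAlgebra σ b) := Module.finite_of_finrank_pos (by omega)
  let D : CentralDivAlg :=
    { K := K
      A := cyclicAlgebra σ b
      divisionRingA := divisionRingOfFiniteDimensional K _
      algebraKA := (cyclicAlgebra σ b).algebra
      center_eq_bot := center_cyclicAlgebra hσ hfix hσξ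
      finrank_eq_nine := hfr }
  let φ : L →ₐ[D.K] D.A := cyclicAlgebraDiag b hσ
  let u : D.Aˣ := Units.map φ.toRingHom.toMonoidHom (Units.mk0 g hg)
  refine ⟨D, QuotientGroup.mk u, orderOf_eq_of_pow_eq_one_iff fun k ↦ ?_⟩
  rw [← QuotientGroup.mk_pow, QuotientGroup.eq_one_iff, ← hξ.pow_eq_one_iff_dvd]
  have hu : ((u ^ k : D.Aˣ) : D.A) = φ (g ^ k) := by
    rw [Units.val_pow_eq_pow_val, map_pow]
    rfl
  have hfixk : σ (g ^ k) = g ^ k ↔ ξ ^ k = 1 := by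
    rw [map_pow, hσg, mul_pow, mul_eq_right₀ (pow_ne_zero k hg)]
  rw [← hfixk]
  constructor
  · rintro ⟨c, hc⟩
    have h1 : φ (algebraMap K L c) = φ (g ^ k) := by
      rw [← hu, ← hc]
      exact φ.commutes (c : K)
    rw [← φ.toRingHom.injective h1]
    exact σ.commutes c
  · intro h
    obtain ⟨c, hc⟩ := hfix _ h
    have hc0 : c ≠ 0 := by
      rintro rfl
      exact pow_ne_zero k hg (by rw [← hc, map_zero])
    refine ⟨Units.mk0 c hc0, Units.ext ?_⟩
    rw [hu, ← hc]
    exact (φ.commutes c).symm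

section Frobenius

open NumberField IsDedekindDomain WithZero
open scoped Pointwise

theorem IsDedekindDomain.HeightOneSpectrum.intValuation_le_of_map_le {R : Type*} [CommRing R]
    [IsDedekindDomain R] (P : HeightOneSpectrum R) (f : R →+* R)
    (hf : P.asIdeal.map f ≤ P.asIdeal) (r : R) : P.intValuation (f r) ≤ P.intValuation r := by
  rcases eq_or_ne r 0 with rfl | hr
  · simp
  rw [P.intValuation_eq_exp_neg_multiplicity hr, P.intValuation_le_pow_iff_mem]
  have hmem := (P.intValuation_le_pow_iff_mem r _).1
    (P.intValuation_eq_exp_neg_multiplicity hr).le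
  have hmap := Ideal.mem_map_of_mem f hmem
  rw [Ideal.map_pow] at hmap
  exact Ideal.pow_right_mono hf _ hmap

theorem IsCyclotomicExtension.Rat.exists_frobenius_valuation {n : ℕ} [NeZero n] {L : Type*}
    [Field L] [NumberField L] [IsCyclotomicExtension {n} ℚ L] {q : ℕ} [Fact q.Prime]
    (hq : ¬ q ∣ n) :
    ∃ (σ : L ≃ₐ[ℚ] L) (v : Valuation L ℤᵐ⁰), (∀ x, v (σ x) = v x) ∧ v q = exp (-1) ∧
      ∀ ζ : L, ζ ^ n = 1 → σ ζ = ζ ^ q := by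
  have hqp : q.Prime := Fact.out
  have hq0 : (q : ℤ) ≠ 0 := mod_cast hqp.ne_zero
  have hqZ : Prime (q : ℤ) := Nat.prime_iff_prime_int.1 hqp
  let I : Ideal ℤ := Ideal.span {(q : ℤ)}
  have hI0 : I ≠ ⊥ := by simpa [I] using hqp.ne_zero
  have hIprime : I.IsPrime := (Ideal.span_singleton_prime hq0).2 hqZ
  have : I.IsMaximal := hIprime.isMaximal hI0
  obtain ⟨P, hPmax, hP⟩ := Ideal.exists_maximal_ideal_liesOver_of_isIntegral I (S := 𝓞 L)
  have hP0 : P ≠ ⊥ := Ideal.ne_bot_of_liesOver_of_ne_bot hI0 P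
  have : Finite (𝓞 L ⧸ P) := Ideal.finiteQuotientOfFreeOfNeBot P hP0
  have : IsGalois ℚ L := IsCyclotomicExtension.isGalois {n} ℚ L
  obtain ⟨σ, hσ⟩ := IsArithFrobAt.exists_of_isInvariant ℤ (L ≃ₐ[ℚ] L) P
  have hunder : P.under ℤ = I := hP.over.symm
  have hcard : Nat.card (ℤ ⧸ P.under ℤ) = q := by
    rw [hunder, Nat.card_congr (Int.quotientSpanNatEquivZMod q).toEquiv, Nat.card_zmod]
  let w : HeightOneSpectrum (𝓞 L) := ⟨P, inferInstance, hP0⟩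
  have hsmul : ∀ τ : L ≃ₐ[ℚ] L, τ • P = P → ∀ x, w.valuation L (τ x) ≤ w.valuation L x := by
    intro τ hτ x
    obtain ⟨r, s, hs0, rfl⟩ := IsFractionRing.div_surjective (A := 𝓞 L) x
    have hr : w.intValuation (τ • r) ≤ w.intValuation r :=
      w.intValuation_le_of_map_le (MulSemiringAction.toRingHom _ (𝓞 L) τ) hτ.le r
    have hs : w.intValuation (τ⁻¹ • (τ • s)) ≤ w.intValuation (τ • s) :=
      w.intValuation_le_of_map_le (MulSemiringAction.toRingHom _ (𝓞 L) τ⁻¹)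
        (inv_smul_eq_iff.2 hτ.symm).le (τ • s)
    rw [inv_smul_smul] at hs
    have hc (a : 𝓞 L) : τ (algebraMap (𝓞 L) L a) = algebraMap (𝓞 L) L (τ • a) := rfl
    rw [map_div₀, map_div₀, map_div₀, hc, hc]
    simp only [HeightOneSpectrum.valuation_of_algebraMap]
    gcongr
    · exact zero_le
    · exact w.intValuation_zero_lt ⟨s, hs0⟩
  refine ⟨σ, w.valuation L, fun x ↦ ?_, ?_, fun ζ hζ ↦ ?_⟩
  · have hσP : σ • P = P := hσ.mem_stabilizer
    refine (hsmul σ hσP x).antisymm ?_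
    simpa using hsmul σ⁻¹ (inv_smul_eq_iff.2 hσP.symm) (σ x)
  · have := IsCyclotomicExtension.Rat.ramificationIdx_eq_of_not_dvd q L P hq
    rw [Ideal.IsDedekindDomain.ramificationIdx_eq_multiplicity I P
      ((Ideal.map_eq_bot_iff_of_injective (FaithfulSMul.algebraMap_injective ℤ (𝓞 L))).not.2 hI0),
      Ideal.map_span, Set.image_singleton] at this
    rw [← map_natCast (algebraMap (𝓞 L) L), HeightOneSpectrum.valuation_of_algebraMap,
      w.intValuation_eq_exp_neg_multiplicity (mod_cast hqp.ne_zero)]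
    simpa [w] using this
  · have hζi : IsIntegral ℤ ζ := IsIntegral.of_pow (NeZero.pos n) (hζ ▸ isIntegral_one)
    have hn : (n : 𝓞 L) ∉ P := by
      intro h
      have h2 : (n : ℤ) ∈ P.under ℤ := by simpa [Ideal.mem_comap] using h
      rw [hunder, Ideal.mem_span_singleton] at h2
      exact hq (Int.natCast_dvd_natCast.1 h2)
    have h := AlgHom.IsArithFrobAt.apply_of_pow_eq_one hσ (ζ := (⟨ζ, hζi⟩ : 𝓞 L)) (m := n)
      (by ext; exact hζ) hn
    rw [hcard] at h
    exact congrArg (algebraMap (𝓞 L) L) h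

end Frobenius

theorem exists_centralDivAlg_orderOf_eq_of_dvd {n : ℕ} (hn : 3 < n) {a : ℤ}
    (ha : (n : ℤ) ∣ a ^ 2 + a + 1) (L : Type) [Field L] [NumberField L]
    [IsCyclotomicExtension {n} ℚ L] : ∃ (D : CentralDivAlg) (g : D.Q), orderOf g = n := by
  have : NeZero n := ⟨by omega⟩
  have haZ : (a : ZMod n) ^ 2 + a + 1 = 0 := by
    exact_mod_cast (ZMod.intCast_zmod_eq_zero_iff_dvd _ n).2 ha
  have hunit : IsUnit (a : ZMod n) := IsUnit.of_mul_eq_one (-(a + 1)) (by linear_combination -haZ)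
  obtain ⟨q, hqn, hqp, hqa⟩ := Nat.forall_exists_prime_gt_and_eq_mod hunit n
  have : Fact q.Prime := ⟨hqp⟩
  rw [← hqa] at haZ
  have hdvd : n ∣ q ^ 2 + q + 1 := by
    rw [← ZMod.natCast_eq_zero_iff]
    exact_mod_cast haZ
  obtain ⟨σ, v, hv, hvq, hσ⟩ := IsCyclotomicExtension.Rat.exists_frobenius_valuation (L := L)
    (Nat.not_dvd_of_pos_of_lt (NeZero.pos n) hqn)
  have hξ : IsPrimitiveRoot (IsCyclotomicExtension.zeta n ℚ L) n :=
    IsCyclotomicExtension.zeta_spec n ℚ L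
  set ξ := IsCyclotomicExtension.zeta n ℚ L
  have hσξ : σ ξ = ξ ^ q := hσ ξ hξ.pow_eq_one
  have hσ2 : σ (σ ξ) = ξ ^ q ^ 2 := by rw [hσξ, map_pow, hσξ, ← pow_mul, sq]
  have hnorm : ξ * σ ξ * σ (σ ξ) = 1 := by
    rw [hσ2, hσξ, ← pow_succ', ← pow_add, hξ.pow_eq_one_iff_dvd]
    convert hdvd using 1
    ring
  have hne : σ ξ ≠ ξ := by
    rw [hσξ]
    intro h
    have hdvd1 : n ∣ q - 1 := by
      rw [← hξ.pow_eq_one_iff_dvd]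
      refine mul_right_cancel₀ (hξ.ne_zero (NeZero.ne n)) ?_
      rw [← pow_succ, Nat.sub_add_cancel hqp.one_le, h, one_mul]
    have hq1 : (q : ZMod n) = 1 := by
      have h1 := (ZMod.natCast_eq_zero_iff (q - 1) n).2 hdvd1
      rwa [Nat.cast_sub hqp.one_le, Nat.cast_one, sub_eq_zero] at h1
    rw [hq1] at haZ
    have h3 : n ∣ 3 := by
      rw [← ZMod.natCast_eq_zero_iff, ← haZ]
      norm_num
    exact hn.not_ge (Nat.le_of_dvd three_pos h3)
  have hσ3 : σ ^ 3 = 1 := by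
    refine IsCyclotomicExtension.algEquiv_eq_of_apply_eq (S := {n}) ℚ L fun m hm _ ↦ ?_
    obtain rfl : m = n := hm
    refine ⟨ξ, hξ, ?_⟩
    have h := congrArg σ hnorm
    rw [map_mul, map_mul, map_one, ← hnorm, mul_assoc ξ, mul_comm ξ] at h
    exact mul_left_cancel₀ (mul_ne_zero (by simpa using hξ.ne_zero (NeZero.ne _))
      (by simpa using hξ.ne_zero (NeZero.ne _))) h
  have horder : orderOf σ = 3 := by
    have : Fact (Nat.Prime 3) := ⟨Nat.prime_three⟩
    exact orderOf_eq_prime hσ3 fun h ↦ hne (by rw [h]; rfl)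
  let K := IntermediateField.fixedField (Subgroup.zpowers σ)
  have : NumberField K := NumberField.of_intermediateField K
  let τ : L →ₐ[K] L :=
    { σ.toRingHom with
      commutes' := fun x ↦ x.2 ⟨σ, Subgroup.mem_zpowers σ⟩ }
  have hfix (x : L) (hx : τ x = x) : x ∈ Set.range (algebraMap K L) := by
    have hmem : x ∈ K := by
      rw [IntermediateField.mem_fixedField_iff]
      have hle : Subgroup.zpowers σ ≤ MulAction.stabilizer (L ≃ₐ[ℚ] L) x :=
        Subgroup.zpowers_le.2 hx
      exact fun f hf ↦ hle hf
    exact ⟨⟨x, hmem⟩, rfl⟩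
  refine exists_centralDivAlg_orderOf_eq (K := K) (L := L) (σ := τ) (b := (q : K)) ?_
    (fun x ↦ DFunLike.congr_fun hσ3 x) hfix v hv (by simpa using hvq) hξ hne hnorm
  rw [IntermediateField.finrank_fixedField_eq_card, Nat.card_zpowers, horder]

/-- Let `n` be a positive integer of the form `n = 3^r·∏ p_i^{r_i}` where the `p_i` are primes
congruent to `1` modulo `3` and `r ≤ 1` (equivalently, `n` is not divisible by `9` and not
divisible by any prime congruent to `2` modulo `3`). Then there exist a number field `K` and
a central division algebra `A` of dimension `9` over `K` such that the quotient group `Aˣ/Kˣ`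
contains an element of order `n`. -/
theorem stmt_9 (n : ℕ) (hn : 0 < n) (h9 : ¬ (9 ∣ n))
    (hdiv : ∀ p : ℕ, p.Prime → p ∣ n → p = 3 ∨ p % 3 = 1) :
    ∃ (D : CentralDivAlg) (g : D.Q), orderOf g = n := by
  have : NeZero (7 * n) := ⟨by omega⟩
  have : IsCyclotomicExtension {7 * n} ℚ (CyclotomicField (7 * n) ℚ) :=
    CyclotomicField.isCyclotomicExtension (7 * n) ℚ
  obtain ⟨a, ha⟩ := exists_dvd_sq_add_add_one (n := 7 * n) (by omega)
    (fun h ↦ h9 (Nat.Coprime.dvd_of_dvd_mul_left (by norm_num) h)) fun p hp h ↦ by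
      rcases (hp.dvd_mul).1 h with h | h
      · rw [(Nat.prime_dvd_prime_iff_eq hp (by norm_num)).1 h]
        norm_num
      · exact hdiv p hp h
  obtain ⟨D, g, hg⟩ := exists_centralDivAlg_orderOf_eq_of_dvd (by omega) ha
    (CyclotomicField (7 * n) ℚ)
  refine ⟨D, g ^ 7, ?_⟩
  rw [orderOf_pow_of_dvd (by norm_num) (hg ▸ dvd_mul_right 7 n), hg,
    Nat.mul_div_cancel_left n (by norm_num)]
end

section
/- Let K be a field of characteristic zero, let A be an associative unital K-algebra which is a division ring with center equal to K and of dimension 9 over K, and let G be a finite group of order a power of 3 admitting an injective group homomorphism into the group Aˣ/Kˣ. Then G is isomorphic to a subgroup of μ_3 × μ_3; in particular, the order of G divides 9 and G is abelian of exponent dividing 3. -/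
theorem finrank_subalgebra_dvd {K A : Type*} [Field K] [DivisionRing A] [Algebra K A]
    [FiniteDimensional K A] (D : Subalgebra K A) :
    Module.finrank K D ∣ Module.finrank K A := by
  let : DivisionRing D := divisionRingOfFiniteDimensional K D
  exact ⟨_, (Module.finrank_mul_finrank K D A).symm⟩

theorem centralizer_eq_span_of_cube {K A : Type*} [Field K] [DivisionRing A] [Algebra K A]
    (hcenter : Subalgebra.center K A = ⊥) (hrank : Module.finrank K A = 9)
    {y : A} {a : K} (hy : y ∉ (⊥ : Subalgebra K A)) (ha : y ^ 3 = algebraMap K A a) :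
    Subalgebra.toSubmodule (Subalgebra.centralizer K {y}) =
        Submodule.span K (Set.range ![1, y, y ^ 2]) ∧
      LinearIndependent K ![1, y, y ^ 2] := by
  have : FiniteDimensional K A := Module.finite_of_finrank_pos (by omega)
  set D := Algebra.adjoin K {y} with hD
  set C := Subalgebra.centralizer K {y} with hC
  have hDC : D ≤ C := Algebra.adjoin_le <|
    Set.singleton_subset_iff.2 <| (Subalgebra.mem_centralizer_iff K).2 <| by
      rintro _ rfl
      rfl
  have hCtop : C ≠ ⊤ := by
    intro h
    apply hy
    rw [← hcenter, Subalgebra.mem_center_iff]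
    intro b
    have hb : b ∈ C := h ▸ Algebra.mem_top
    exact ((Subalgebra.mem_centralizer_iff K).1 hb y rfl).symm
  have hDbot : D ≠ ⊥ := fun h => hy (h ▸ Algebra.self_mem_adjoin_singleton K y)
  have hle : Module.finrank K D ≤ Module.finrank K C :=
    Submodule.finrank_mono (s := Subalgebra.toSubmodule D) (t := Subalgebra.toSubmodule C) hDC
  have hC9 : Module.finrank K C ≠ 9 := fun h => hCtop <| by
    apply Algebra.toSubmodule_eq_top.1
    exact Submodule.eq_top_of_finrank_eq (h.trans hrank.symm)
  have hD1 : Module.finrank K D ≠ 1 := fun h => hDbot (Subalgebra.eq_bot_of_finrank_one h)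
  have key : ∀ n : ℕ, n ∣ 9 → n = 1 ∨ n = 3 ∨ n = 9 := by
    intro n hn
    have := Nat.le_of_dvd (by norm_num) hn
    interval_cases n <;> omega
  have h1 := key _ (hrank ▸ finrank_subalgebra_dvd D)
  have h2 := key _ (hrank ▸ finrank_subalgebra_dvd C)
  have hD3 : Module.finrank K D = 3 := by omega
  have hC3 : Module.finrank K C = 3 := by omega
  have hspan : Subalgebra.toSubmodule D = Submodule.span K (Set.range ![1, y, y ^ 2]) := by
    apply le_antisymm
    · rw [hD, Algebra.adjoin_eq_span, Submodule.span_le]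
      intro t ht
      obtain ⟨n, rfl⟩ := Submonoid.mem_closure_singleton.1 ht
      have hlt : n % 3 < 3 := Nat.mod_lt _ (by norm_num)
      have hn : y ^ n = a ^ (n / 3) • y ^ (n % 3) := by
        conv_lhs => rw [← Nat.div_add_mod n 3, pow_add, pow_mul, ha, ← map_pow]
        rw [Algebra.smul_def]
      rw [SetLike.mem_coe, hn]
      refine Submodule.smul_mem _ _ (Submodule.subset_span ?_)
      interval_cases n % 3
      · exact ⟨0, by simp⟩
      · exact ⟨1, by simp⟩
      · exact ⟨2, by simp⟩
    · rw [Submodule.span_le]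
      have hyD : y ∈ D := Algebra.self_mem_adjoin_singleton K y
      rintro _ ⟨i, rfl⟩
      fin_cases i
      · exact D.one_mem
      · exact hyD
      · exact D.pow_mem hyD 2
  have hCD : Subalgebra.toSubmodule D = Subalgebra.toSubmodule C :=
    Submodule.eq_of_le_of_finrank_eq hDC (hD3.trans hC3.symm)
  refine ⟨hCD ▸ hspan, ?_⟩
  rw [linearIndependent_iff_card_eq_finrank_span, Set.finrank, ← hspan]
  exact hD3.symm

theorem exists_coords_of_commute {K A : Type*} [Field K] [DivisionRing A] [Algebra K A]
    (hcenter : Subalgebra.center K A = ⊥) (hrank : Module.finrank K A = 9)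
    {y : A} {a : K} (hy : y ∉ (⊥ : Subalgebra K A)) (ha : y ^ 3 = algebraMap K A a)
    {w : A} (hw : Commute y w) : ∃ p q r : K, w = p • 1 + q • y + r • y ^ 2 := by
  have hmem : w ∈ Subalgebra.toSubmodule (Subalgebra.centralizer K {y}) :=
    (Subalgebra.mem_centralizer_iff K).2 (by rintro _ rfl; exact hw)
  rw [(centralizer_eq_span_of_cube hcenter hrank hy ha).1,
    Submodule.mem_span_range_iff_exists_fun] at hmem
  obtain ⟨c, hc⟩ := hmem
  exact ⟨c 0, c 1, c 2, by simpa [Fin.sum_univ_three] using hc.symm⟩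

theorem coords_eq_of_eq {K A : Type*} [Field K] [DivisionRing A] [Algebra K A]
    (hcenter : Subalgebra.center K A = ⊥) (hrank : Module.finrank K A = 9)
    {y : A} {a : K} (hy : y ∉ (⊥ : Subalgebra K A)) (ha : y ^ 3 = algebraMap K A a)
    {p q r p' q' r' : K}
    (h : p • (1 : A) + q • y + r • y ^ 2 = p' • 1 + q' • y + r' • y ^ 2) :
    p = p' ∧ q = q' ∧ r = r' := by
  have hli := (centralizer_eq_span_of_cube hcenter hrank hy ha).2
  rw [Fintype.linearIndependent_iff] at hli
  have := hli ![p - p', q - q', r - r'] (by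
    simp only [Fin.sum_univ_three, Matrix.cons_val, sub_smul]
    rw [← sub_eq_zero] at h
    rw [← h]
    abel)
  exact ⟨sub_eq_zero.1 (this 0), sub_eq_zero.1 (this 1), sub_eq_zero.1 (this 2)⟩

theorem ne_cube_of_pow_three_eq {K A : Type*} [Field K] [DivisionRing A] [Algebra K A]
    (hcenter : Subalgebra.center K A = ⊥) (hrank : Module.finrank K A = 9)
    {y : A} {a : K} (hy : y ∉ (⊥ : Subalgebra K A)) (ha : y ^ 3 = algebraMap K A a) (n : K) :
    a ≠ n ^ 3 := by
  rintro rfl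
  have hc : y * algebraMap K A n = algebraMap K A n * y := (Algebra.commutes n y).symm
  have hfac : (y - algebraMap K A n) *
      (algebraMap K A n ^ 2 + algebraMap K A n * y + y ^ 2) = 0 := by
    have : (Commute y (algebraMap K A n)) := hc
    have h := this.mul_geom_sum₂ 3
    rw [ha, map_pow, sub_self] at h
    rw [← h, Finset.sum_range_succ, Finset.sum_range_succ, Finset.sum_range_one]
    simp [hc]
  rcases mul_eq_zero.1 hfac with h | h
  · exact hy ⟨n, (sub_eq_zero.1 h).symm⟩
  · have h' : (n ^ 2) • (1 : A) + n • y + (1 : K) • y ^ 2 =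
        (0 : K) • 1 + (0 : K) • y + (0 : K) • y ^ 2 := by
      simpa [Algebra.smul_def] using h
    exact one_ne_zero (coords_eq_of_eq hcenter hrank hy ha h').2.2

open Polynomial in
theorem cube_coords {K A : Type*} [Field K] [DivisionRing A] [Algebra K A]
    {y : A} {a : K} (ha : y ^ 3 = algebraMap K A a) (p q r : K) :
    (p • (1 : A) + q • y + r • y ^ 2) ^ 3 =
      (p ^ 3 + a * q ^ 3 + a ^ 2 * r ^ 3 + 6 * a * p * q * r) • (1 : A) +
      (3 * (p ^ 2 * q + a * p * r ^ 2 + a * q ^ 2 * r)) • y +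
      (3 * (p ^ 2 * r + p * q ^ 2 + a * q * r ^ 2)) • y ^ 2 := by
  have h := congrArg (aeval y) (show (C p + C q * X + C r * X ^ 2 : K[X]) ^ 3 =
      C (p ^ 3 + a * q ^ 3 + a ^ 2 * r ^ 3 + 6 * a * p * q * r) +
      C (3 * (p ^ 2 * q + a * p * r ^ 2 + a * q ^ 2 * r)) * X +
      C (3 * (p ^ 2 * r + p * q ^ 2 + a * q * r ^ 2)) * X ^ 2 +
      (X ^ 3 - C a) * (6 * C p * C q * C r + C q ^ 3 + 3 * (C p * C r ^ 2 + C q ^ 2 * C r) * X +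
        3 * C q * C r ^ 2 * X ^ 2 + C r ^ 3 * (X ^ 3 + C a)) by
    simp only [map_add, map_mul, map_pow, map_ofNat]
    ring)
  rw [map_add, map_mul (aeval y) (X ^ 3 - C a), map_sub] at h
  simpa [ha, Algebra.smul_def] using h

theorem cube_mem_bot_of_pow_nine_mem_bot {K A : Type*} [Field K] [DivisionRing A] [Algebra K A]
    (hcenter : Subalgebra.center K A = ⊥) (hrank : Module.finrank K A = 9)
    {x : A} (hx : x ^ 9 ∈ (⊥ : Subalgebra K A)) : x ^ 3 ∈ (⊥ : Subalgebra K A) := by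
  by_contra hy
  obtain ⟨a, ha⟩ := Algebra.mem_bot.1 hx
  have ha : (x ^ 3) ^ 3 = algebraMap K A a := by rw [ha, ← pow_mul]
  obtain ⟨p, q, r, hw⟩ := exists_coords_of_commute hcenter hrank hy ha
    (Commute.pow_self x 3)
  have h3 := cube_coords ha p q r
  rw [← hw] at h3
  obtain ⟨e0, e1, e2⟩ := coords_eq_of_eq hcenter hrank hy ha
    (h3.symm.trans (show x ^ 3 = (0 : K) • 1 + (1 : K) • x ^ 3 + (0 : K) • (x ^ 3) ^ 2 by simp))
  apply ne_cube_of_pow_three_eq hcenter hrank hy ha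
    (p ^ 3 + a * q ^ 3 + a ^ 2 * r ^ 3 - 3 * a * p * q * r)
  have norm_cube : ∀ u v w : K,
      p ^ 3 + a * q ^ 3 + a ^ 2 * r ^ 3 + 6 * a * p * q * r = u →
      3 * (p ^ 2 * q + a * p * r ^ 2 + a * q ^ 2 * r) = v →
      3 * (p ^ 2 * r + p * q ^ 2 + a * q * r ^ 2) = w →
      u ^ 3 + a * v ^ 3 + a ^ 2 * w ^ 3 - 3 * a * u * v * w =
        (p ^ 3 + a * q ^ 3 + a ^ 2 * r ^ 3 - 3 * a * p * q * r) ^ 3 := by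
    rintro _ _ _ rfl rfl rfl
    ring
  simpa using norm_cube _ _ _ e0 e1 e2

theorem exists_eq_smul_pow {K A : Type*} [Field K] [CharZero K] [DivisionRing A] [Algebra K A]
    (hcenter : Subalgebra.center K A = ⊥) (hrank : Module.finrank K A = 9)
    {y : A} (hy : y ∉ (⊥ : Subalgebra K A)) (hy3 : y ^ 3 ∈ (⊥ : Subalgebra K A))
    {w : A} (hw : Commute y w) (hw3 : w ^ 3 ∈ (⊥ : Subalgebra K A)) :
    ∃ (c : K) (i : ℕ), w = c • y ^ i := by
  obtain ⟨a, ha⟩ := Algebra.mem_bot.1 hy3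
  obtain ⟨b, hb⟩ := Algebra.mem_bot.1 hw3
  obtain ⟨p, q, r, rfl⟩ := exists_coords_of_commute hcenter hrank hy ha.symm hw
  have h3 := cube_coords ha.symm p q r
  rw [← hb] at h3
  obtain ⟨-, e1, e2⟩ := coords_eq_of_eq hcenter hrank hy ha.symm
    (h3.symm.trans (show algebraMap K A b = b • 1 + (0 : K) • y + (0 : K) • y ^ 2 by
      simp [Algebra.smul_def]))
  have e1 := (mul_eq_zero.1 e1).resolve_left (by norm_num)
  have e2 := (mul_eq_zero.1 e2).resolve_left (by norm_num)
  have ha0 : a ≠ 0 := by simpa using ne_cube_of_pow_three_eq hcenter hrank hy ha.symm 0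
  have hpqr : p * (a * r ^ 3 - q ^ 3) = 0 := by linear_combination r * e1 - q * e2
  rcases mul_eq_zero.1 hpqr with rfl | h
  · have : q = 0 ∨ r = 0 := by simpa [ha0] using e1
    rcases this with rfl | rfl
    · exact ⟨r, 2, by simp⟩
    · exact ⟨q, 1, by simp⟩
  · have hr : r = 0 := by
      by_contra hr
      apply ne_cube_of_pow_three_eq hcenter hrank hy ha.symm (q / r)
      field_simp
      linear_combination h
    subst hr
    have hq : q = 0 := by simpa using h
    subst hq
    exact ⟨p, 0, by simp⟩

theorem exists_injective_hom_zmod_prod {G : Type*} [Group G] [Finite G]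
    (hG : ∃ k : ℕ, Nat.card G = 3 ^ k) (hexp : ∀ g : G, g ^ 3 = 1) (hcard : Nat.card G ≤ 9) :
    ∃ h : G →* Multiplicative (ZMod 3 × ZMod 3), Function.Injective h := by
  have : Fact (Nat.Prime 3) := ⟨Nat.prime_three⟩
  obtain ⟨k, hk⟩ := hG
  have hk2 : k ≤ 2 := by
    by_contra! h
    have : 3 ^ 3 ≤ 3 ^ k := Nat.pow_le_pow_right (by norm_num) h
    omega
  have hcomm : ∀ a b : G, a * b = b * a := by
    intro a b
    interval_cases k
    · have := (Nat.card_eq_one_iff_unique.1 hk).1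
      exact Subsingleton.elim _ _
    · have := isCyclic_of_prime_card (hk.trans (pow_one 3))
      exact mul_comm' a b
    · exact (IsPGroup.isMulCommutative_of_card_eq_prime_sq hk).is_comm.comm a b
  let : CommGroup G := { mul_comm := hcomm }
  let : Module (ZMod 3) (Additive G) :=
    AddCommGroup.zmodModule fun x => congrArg Additive.ofMul (hexp x.toMul)
  have hfin : Module.finrank (ZMod 3) (Additive G) = k := by
    have h := Module.natCard_eq_pow_finrank (K := ZMod 3) (V := Additive G)
    rw [Nat.card_zmod] at h
    exact Nat.pow_right_injective (by norm_num : 2 ≤ 3) (h.symm.trans hk)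
  obtain ⟨φ, hφ⟩ := (finrank_le_iff_exists_linearMap (R := ZMod 3) (M := Additive G)
    (M' := ZMod 3 × ZMod 3)).1 (by simpa [hfin] using hk2)
  exact ⟨AddMonoidHom.toMultiplicativeRight φ.toAddMonoidHom, hφ⟩

theorem mem_centralUnits_iff {K A : Type*} [Field K] [DivisionRing A] [Algebra K A] {u : Aˣ} :
    u ∈ centralUnits K A ↔ (u : A) ∈ (⊥ : Subalgebra K A) := by
  rw [Algebra.mem_bot]
  constructor
  · rintro ⟨k, rfl⟩
    exact ⟨k, rfl⟩
  · rintro ⟨k, hk⟩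
    refine ⟨Units.mk0 k ?_, Units.ext hk⟩
    rintro rfl
    exact u.ne_zero (by rw [← hk, map_zero])

theorem pow_three_eq_one_of_pow_three_pow_eq_one {K A : Type*} [Field K] [DivisionRing A]
    [Algebra K A]
    (hcenter : Subalgebra.center K A = ⊥) (hrank : Module.finrank K A = 9)
    {g : Aˣ ⧸ centralUnits K A} {k : ℕ} (hg : g ^ 3 ^ k = 1) : g ^ 3 = 1 := by
  have step : ∀ g : Aˣ ⧸ centralUnits K A, g ^ 9 = 1 → g ^ 3 = 1 := by
    intro g
    induction g using QuotientGroup.induction_on with | H u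
    simp only [← QuotientGroup.mk_pow, QuotientGroup.eq_one_iff, mem_centralUnits_iff,
      Units.val_pow_eq_pow_val]
    exact cube_mem_bot_of_pow_nine_mem_bot hcenter hrank
  induction k with
  | zero => simp_all
  | succ k ih =>
    rcases k with _ | k
    · simpa using hg
    · apply ih
      rw [pow_succ, pow_mul]
      apply step
      rw [← pow_mul, ← hg]
      ring_nf

open scoped commutatorElement in
/-- Two classes in `Aˣ/Kˣ` commute only if their lifts commute up to a scalar. -/
theorem commutator_mem_centralUnits {K A : Type*} [Field K] [DivisionRing A] [Algebra K A]
    {u x : Aˣ} (h : Commute (u : Aˣ ⧸ centralUnits K A) x) :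
    ⁅u, x⁆ ∈ centralUnits K A := by
  rw [← QuotientGroup.eq_one_iff]
  have : ((⁅u, x⁆ : Aˣ) : Aˣ ⧸ centralUnits K A) =
      ⁅(u : Aˣ ⧸ centralUnits K A), (x : Aˣ ⧸ centralUnits K A)⁆ := rfl
  rw [this, commutatorElement_eq_one_iff_commute]
  exact h

open scoped commutatorElement in
theorem card_le_nine_of_mem_center {K A : Type*} [Field K] [CharZero K] [DivisionRing A]
    [Algebra K A]
    (hcenter : Subalgebra.center K A = ⊥) (hrank : Module.finrank K A = 9)
    {G : Type*} [Group G] [Finite G]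
    (f : G →* Aˣ ⧸ centralUnits K A) (hf : Function.Injective f)
    (hexp : ∀ g : G, g ^ 3 = 1) {z : G} (hz : z ∈ Subgroup.center G) (hz1 : z ≠ 1) :
    Nat.card G ≤ 9 := by
  have comm : ∀ {u : Aˣ}, u ∈ centralUnits K A → ∀ v, u * v = v * u := by
    rintro _ ⟨k, rfl⟩ v
    exact Units.ext (Algebra.commutes (k : K) (v : A))
  choose u hu using fun g => QuotientGroup.mk_surjective (f g)
  have hu3 : ∀ g, (u g : A) ^ 3 ∈ (⊥ : Subalgebra K A) := by
    intro g
    rw [← Units.val_pow_eq_pow_val, ← mem_centralUnits_iff, ← QuotientGroup.eq_one_iff,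
      QuotientGroup.mk_pow, hu, ← map_pow, hexp, map_one]
  set x := u z with hx
  have hxbot : (x : A) ∉ (⊥ : Subalgebra K A) := by
    rw [← mem_centralUnits_iff, ← QuotientGroup.eq_one_iff, hu]
    exact fun h => hz1 (hf (h.trans (map_one f).symm))
  have hc : ∀ g, ⁅u g, x⁆ ∈ centralUnits K A := fun g => commutator_mem_centralUnits <| by
    rw [hx, hu g, hu z]
    exact (show Commute g z from Subgroup.mem_center_iff.1 hz g).map f
  have hconj : ∀ g, u g * x * (u g)⁻¹ = ⁅u g, x⁆ * x := fun g => by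
    rw [commutatorElement_def]; group
  let χ : G →* Aˣ := MonoidHom.mk' (fun g => ⁅u g, x⁆) <| by
    intro g h
    have hd : (u g * u h)⁻¹ * u (g * h) ∈ centralUnits K A := by
      rw [← QuotientGroup.eq, hu, QuotientGroup.mk_mul, hu, hu, map_mul]
    set d := (u g * u h)⁻¹ * u (g * h) with hd'
    have hgh : u (g * h) = u g * u h * d := by rw [hd']; group
    rw [eq_comm, ← mul_left_inj x, ← hconj (g * h), hgh]
    calc ⁅u g, x⁆ * ⁅u h, x⁆ * x = ⁅u h, x⁆ * (u g * x * (u g)⁻¹) := by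
          rw [hconj, comm (hc g) ⁅u h, x⁆, mul_assoc]
      _ = u g * (u h * x * (u h)⁻¹) * (u g)⁻¹ := by
          rw [hconj h]
          simp only [← mul_assoc]
          rw [comm (hc h) (u g)]
      _ = u g * u h * (d * x * d⁻¹) * (u g * u h)⁻¹ := by
          rw [comm hd]; group
      _ = _ := by group
  have hrange : Nat.card χ.range ≤ 3 := by
    have hle : χ.range ≤ (rootsOfUnity 3 K).map (Units.map (algebraMap K A).toMonoidHom) := by
      rintro _ ⟨g, rfl⟩
      obtain ⟨k, hk⟩ := hc g
      refine ⟨k, ?_, hk⟩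
      have h1 : χ g ^ 3 = 1 := by rw [← map_pow, hexp, map_one]
      have h2 : Units.map (algebraMap K A).toMonoidHom (k ^ 3) = 1 := by
        rw [map_pow, hk]; exact h1
      rw [SetLike.mem_coe, mem_rootsOfUnity]
      exact Units.map_injective (algebraMap K A).injective (h2.trans (map_one _).symm)
    have hfin : (rootsOfUnity 3 K : Set Kˣ).Finite :=
      Set.finite_coe_iff.1 (inferInstanceAs (Finite (rootsOfUnity 3 K)))
    calc Nat.card χ.range ≤ Nat.card
          ((rootsOfUnity 3 K).map (Units.map (algebraMap K A).toMonoidHom)) :=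
          Nat.card_mono (hfin.image _) hle
      _ ≤ Nat.card (rootsOfUnity 3 K) :=
          Nat.card_image_le hfin
      _ ≤ 3 := card_rootsOfUnity K 3
  have hker : Nat.card χ.ker ≤ 3 := by
    have hle : χ.ker ≤ Subgroup.zpowers z := by
      intro g hg
      have hcomm : Commute (u g) x :=
        commutatorElement_eq_one_iff_commute.1 (MonoidHom.mem_ker.1 hg)
      obtain ⟨c, i, hci⟩ := exists_eq_smul_pow hcenter hrank hxbot (hu3 z)
        (congrArg Units.val hcomm.symm.eq) (hu3 g)
      refine ⟨i, hf ?_⟩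
      simp only [zpow_natCast]
      rw [map_pow, ← hu, ← hu, ← QuotientGroup.mk_pow, QuotientGroup.eq, mem_centralUnits_iff,
        Algebra.mem_bot]
      refine ⟨c, ?_⟩
      rw [Units.val_mul, hci, mul_smul_comm, ← Units.val_pow_eq_pow_val, Units.inv_mul,
        Algebra.smul_def, mul_one]
    calc Nat.card χ.ker ≤ Nat.card (Subgroup.zpowers z) := Nat.card_mono (Set.toFinite _) hle
      _ = orderOf z := Nat.card_zpowers z
      _ ≤ 3 := orderOf_le_of_pow_eq_one (by norm_num) (hexp z)
  rw [← Subgroup.card_mul_index χ.ker, Subgroup.index_ker]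
  exact Nat.mul_le_mul hker hrange

/-- Let `K` be a field of characteristic zero, `A` a central division algebra of dimension `9`
over `K`, and `G` a finite group of order a power of `3` admitting an injective group
homomorphism into `Aˣ/Kˣ` (the automorphism group of the non-trivial Severi–Brauer surface
corresponding to `A`). Then `G` is isomorphic to a subgroup of `μ₃ × μ₃`. -/
theorem stmt_15 (K : Type) [Field K] [CharZero K]
    (A : Type) [DivisionRing A] [Algebra K A]
    (hcenter : Subalgebra.center K A = ⊥) (hrank : Module.finrank K A = 9)
    (G : Type) [Group G] [Finite G] (hG : ∃ k : ℕ, Nat.card G = 3 ^ k)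
    (f : G →* Aˣ ⧸ centralUnits K A) (hf : Function.Injective f) :
    ∃ h : G →* Multiplicative (ZMod 3 × ZMod 3), Function.Injective h := by
  have hexp : ∀ g : G, g ^ 3 = 1 := by
    intro g
    obtain ⟨k, hk⟩ := hG
    apply hf
    rw [map_pow, map_one]
    apply pow_three_eq_one_of_pow_three_pow_eq_one hcenter hrank (k := k)
    rw [← map_pow, ← hk, pow_card_eq_one', map_one]
  apply exists_injective_hom_zmod_prod hG hexp
  rcases subsingleton_or_nontrivial G with _ | _
  · simp
  · have : Fact (Nat.Prime 3) := ⟨Nat.prime_three⟩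
    obtain ⟨k, hk⟩ := hG
    have := (IsPGroup.of_card hk).center_nontrivial
    obtain ⟨⟨z, hz⟩, hz1⟩ := exists_ne (1 : Subgroup.center G)
    exact card_le_nine_of_mem_center hcenter hrank f hf hexp hz fun h => hz1 (Subtype.ext h)
end
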